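/- For the elephant random walk with memory parameter p ∈ [0, 1) on a Cayley graph that is the d-regular tree T_d (d ≥ 3), for any m ∈ [1, 2) there exists a constant C > 0 (depending on p, d, m) such that E|Δ_n/n − (d − 2)/d|^m ≤ C · r_n^{−m} for all n ≥ 1, where r_n = n^{1/2} if p < p_d, r_n = (n / log n)^{1/2} if p = p_d, and r_n = n^{d(1−p)/(d−1)} if p > p_d, with p_d = (d + 1)/(2d). -/

import Mathlib

open MeasureTheory ProbabilityTheory Filter

noncomputable section

/-- The Cayley graph of a group with respect to a finite set of generators. -/
def cayleyGraph {G : Type*} [Group G] (S : Finset G) : SimpleGraph G where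
  Adj x y := x ≠ y ∧ (y * x⁻¹ ∈ S ∨ x * y⁻¹ ∈ S)
  symm := by
    constructor
    rintro x y ⟨h1, h2⟩
    refine ⟨h1.symm, ?_⟩
    rcases h2 with h | h
    · exact Or.inr h
    · exact Or.inl h
  loopless := ⟨fun x h => h.1 rfl⟩

/-- The elephant random walk (ERW) with memory parameter `p` on the Cayley graph of a
group `G` with respect to a symmetric generating set `S` of cardinality `d`, not
containing the identity, whose Cayley graph is a tree (hence the `d`-regular tree
`T_d`).  The steps are `g 1, g 2, …` (the value of `g 0` is irrelevant).  The law of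
the process is characterised by: `g 1` is uniform on `S`, and, conditionally on the
first `n` steps being `s 1, …, s n`, the next step `g (n+1)` equals `a ∈ S` with
probability `p * N/n + ((1-p)/(d-1)) * (n-N)/n`, where `N = #{1 ≤ k ≤ n : s k = a}`;
this is precisely the probability that the walker, recalling a uniform past epoch
`D ∈ {1, …, n}`, repeats `g D` with probability `p` and takes any given other step
with probability `(1-p)/(d-1)`. -/
structure ERW (G : Type*) [Group G] [DecidableEq G] (d : ℕ) (p : ℝ)
    (Ω : Type*) [MeasurableSpace Ω] (P : Measure Ω) where
  S : Finset G
  card_S : S.card = d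
  symm_S : ∀ s ∈ S, s⁻¹ ∈ S
  one_not_mem : (1 : G) ∉ S
  tree : (cayleyGraph S).IsTree
  g : ℕ → Ω → G
  meas_g : ∀ n a, MeasurableSet {ω | g n ω = a}
  mem_S : ∀ n, 1 ≤ n → ∀ ω, g n ω ∈ S
  init : ∀ a ∈ S, (P {ω | g 1 ω = a}).toReal = 1 / d
  update : ∀ n, 1 ≤ n → ∀ s : ℕ → G, ∀ a ∈ S,
    (P ({ω | ∀ k ∈ Finset.Icc 1 n, g k ω = s k} ∩ {ω | g (n + 1) ω = a})).toReal
      = (p * ((((Finset.Icc 1 n).filter fun k => s k = a).card : ℝ) / n)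
          + (1 - p) / ((d : ℝ) - 1)
            * (((n : ℝ) - (((Finset.Icc 1 n).filter fun k => s k = a).card : ℝ)) / n))
        * (P {ω | ∀ k ∈ Finset.Icc 1 n, g k ω = s k}).toReal

namespace ERW

variable {G : Type*} [Group G] [DecidableEq G] {d : ℕ} {p : ℝ}
  {Ω : Type*} [MeasurableSpace Ω] {P : Measure Ω}

/-- The position `w n = g n ⋯ g 1` of the walk at time `n`. -/
def pos (E : ERW G d p Ω P) : ℕ → Ω → G
  | 0 => fun _ => 1
  | n + 1 => fun ω => E.g (n + 1) ω * E.pos n ω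

/-- `Δ n`: the (word-metric) distance of the walker from the root at time `n`. -/
def dist (E : ERW G d p Ω P) (n : ℕ) (ω : Ω) : ℕ :=
  (cayleyGraph E.S).dist 1 (E.pos n ω)

/-- `N n a`: the number of `a`-steps taken by time `n`. -/
def count (E : ERW G d p Ω P) (a : G) (n : ℕ) (ω : Ω) : ℕ :=
  ((Finset.Icc 1 n).filter fun k => E.g k ω = a).card

/-- `γ n`: the unique step decreasing the distance to the root by 1
(a junk value if the walker is at the root). -/
def gammaStep (E : ERW G d p Ω P) (n : ℕ) (ω : Ω) : G :=
  @Classical.epsilon G ⟨1⟩ fun s =>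
    s ∈ E.S ∧ (cayleyGraph E.S).dist 1 (s * E.pos n ω) + 1 = E.dist n ω

/-- `ℓ n = N n (γ n)` if the walker is away from the root, and `0` otherwise. -/
def ell (E : ERW G d p Ω P) (n : ℕ) (ω : Ω) : ℕ :=
  if E.pos n ω = 1 then 0 else E.count (E.gammaStep n ω) n ω

/-- `Ξ n = (1/n) ∑_{k=0}^{n-1} (ℓ k / k - 1(Δ k > 0)/d)` (with the convention
`ℓ 0 / 0 = 0`, automatic since division by zero yields zero). -/
def Xi (E : ERW G d p Ω P) (n : ℕ) (ω : Ω) : ℝ :=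
  (1 / n) * ∑ k ∈ Finset.range n,
    ((E.ell k ω : ℝ) / k - (if 0 < E.dist k ω then 1 else 0) / d)

/-- The natural filtration `F n` generated by the steps up to time `n`. -/
def filt (E : ERW G d p Ω P) (n : ℕ) : MeasurableSpace Ω :=
  ⨆ k ∈ Finset.Icc 1 n, MeasurableSpace.comap (E.g k) ⊤

/-- `G n = E[Δ (n+1) - Δ n | F n]`. -/
def drift (E : ERW G d p Ω P) (n : ℕ) : Ω → ℝ :=
  P[fun ω => ((E.dist (n + 1) ω : ℝ) - (E.dist n ω : ℝ)) | E.filt n]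

/-- The martingale differences `Y k = Δ k - Δ (k-1) - G (k-1)`. -/
def mdiff (E : ERW G d p Ω P) (k : ℕ) (ω : Ω) : ℝ :=
  (E.dist k ω : ℝ) - (E.dist (k - 1) ω : ℝ) - E.drift (k - 1) ω

/-- The martingale `M n = ∑_{k=1}^n Y k`. -/
def mart (E : ERW G d p Ω P) (n : ℕ) (ω : Ω) : ℝ :=
  ∑ k ∈ Finset.Icc 1 n, E.mdiff k ω

end ERW

/-- The rate `r n`: `√n` in the subcritical regime `p < p_d = (d+1)/(2d)`,
`√(n / log n)` in the critical regime `p = p_d`, and `n ^ (d(1-p)/(d-1))` in the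
supercritical regime `p > p_d`. -/
def rate (p : ℝ) (d : ℕ) (n : ℕ) : ℝ :=
  if p < ((d : ℝ) + 1) / (2 * d) then Real.sqrt n
  else if p = ((d : ℝ) + 1) / (2 * d) then Real.sqrt ((n : ℝ) / Real.log n)
  else (n : ℝ) ^ ((d : ℝ) * (1 - p) / ((d : ℝ) - 1))


/-! ### Tree facts -/

lemma tree_snd_unique {V : Type*} {H : SimpleGraph V} (hH : H.IsTree) {o x y z : V}
    (hy : H.Adj x y) (hz : H.Adj x z) (hdy : H.dist o y + 1 = H.dist o x)
    (hdz : H.dist o z + 1 = H.dist o x) : y = z := by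
  have key : ∀ v, ∀ h : H.Adj x v, H.dist o v + 1 = H.dist o x →
      ∃ q : H.Walk x o, q.IsPath ∧ q.snd = v := by
    intro v h hd
    obtain ⟨q, hq⟩ := hH.1.exists_walk_length_eq_dist v o
    refine ⟨SimpleGraph.Walk.cons h q, ?_, by simp⟩
    apply SimpleGraph.Walk.isPath_of_length_eq_dist
    rw [SimpleGraph.Walk.length_cons, hq, SimpleGraph.dist_comm, hd, SimpleGraph.dist_comm]
  obtain ⟨q1, h1, e1⟩ := key y hy hdy
  obtain ⟨q2, h2, e2⟩ := key z hz hdz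
  rw [← e1, ← e2, (hH.existsUnique_path x o).unique h1 h2]

lemma tree_exists_down {V : Type*} {H : SimpleGraph V} (hH : H.IsTree) {o x : V}
    (hx : x ≠ o) : ∃ y, H.Adj x y ∧ H.dist o y + 1 = H.dist o x := by
  obtain ⟨q, hq⟩ := hH.1.exists_walk_length_eq_dist x o
  cases q with
  | nil => exact absurd rfl hx
  | cons h q =>
    rename_i v
    refine ⟨v, h, ?_⟩
    rw [SimpleGraph.Walk.length_cons] at hq
    have h1 := SimpleGraph.dist_le q
    have h2 := hH.dist_eq_dist_add_one_of_adj o h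
    rw [SimpleGraph.dist_comm] at h1 hq
    omega

namespace ERW

variable {G : Type*} [Group G] [DecidableEq G] {d : ℕ} {p : ℝ}
  {Ω : Type*} [MeasurableSpace Ω] {P : Measure Ω}

lemma adj_mul (E : ERW G d p Ω P) {s : G} (hs : s ∈ E.S) (x : G) :
    (cayleyGraph E.S).Adj x (s * x) := by
  refine ⟨?_, Or.inl (by simpa using hs)⟩
  intro h
  have : s = 1 := by simpa using h.symm
  exact E.one_not_mem (this ▸ hs)

lemma exists_mul_of_adj (E : ERW G d p Ω P) {x y : G} (h : (cayleyGraph E.S).Adj x y) :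
    ∃ s ∈ E.S, y = s * x := by
  rcases h.2 with h | h
  · exact ⟨_, h, by simp⟩
  · exact ⟨_, E.symm_S _ h, by simp⟩

/-- `down a x`: the step `a` from `x` decreases the distance to the root. -/
def down (E : ERW G d p Ω P) (a x : G) : Prop :=
  (cayleyGraph E.S).dist 1 (a * x) + 1 = (cayleyGraph E.S).dist 1 x

lemma down_unique (E : ERW G d p Ω P) {a b x : G} (ha : a ∈ E.S) (hb : b ∈ E.S)
    (h1 : E.down a x) (h2 : E.down b x) : a = b :=
  mul_right_cancel (tree_snd_unique E.tree (E.adj_mul ha x) (E.adj_mul hb x) h1 h2)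

lemma exists_down (E : ERW G d p Ω P) {x : G} (hx : x ≠ 1) : ∃ a ∈ E.S, E.down a x := by
  obtain ⟨y, hy, h⟩ := tree_exists_down E.tree hx
  obtain ⟨s, hs, rfl⟩ := E.exists_mul_of_adj hy
  exact ⟨s, hs, h⟩

lemma not_down_one (E : ERW G d p Ω P) (a : G) : ¬ E.down a 1 := by
  unfold down
  simp

lemma up_of_not_down (E : ERW G d p Ω P) {a x : G} (ha : a ∈ E.S) (h : ¬ E.down a x) :
    (cayleyGraph E.S).dist 1 (a * x) = (cayleyGraph E.S).dist 1 x + 1 := by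
  have := E.tree.dist_eq_dist_add_one_of_adj 1 (E.adj_mul ha x)
  unfold down at h
  omega

/-! ### Adapted functions -/

/-- `φ` is a function of the first `n` steps. -/
def Adp (E : ERW G d p Ω P) {β : Type*} (n : ℕ) (φ : Ω → β) : Prop :=
  ∀ ω ω', (∀ k ∈ Finset.Icc 1 n, E.g k ω = E.g k ω') → φ ω = φ ω'

/-- The sequence associated with a finite history. -/
def extSeq (E : ERW G d p Ω P) (n : ℕ) (t : Finset.Icc 1 n → E.S) (k : ℕ) : G :=
  if h : k ∈ Finset.Icc 1 n then (t ⟨k, h⟩ : G) else 1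

/-- The cylinder of a history. -/
def cyl (E : ERW G d p Ω P) (n : ℕ) (t : Finset.Icc 1 n → E.S) : Set Ω :=
  {ω | ∀ k ∈ Finset.Icc 1 n, E.g k ω = E.extSeq n t k}

lemma measurableSet_cyl (E : ERW G d p Ω P) (n : ℕ) (t : Finset.Icc 1 n → E.S) :
    MeasurableSet (E.cyl n t) := by
  have : E.cyl n t = ⋂ k ∈ Finset.Icc 1 n, {ω | E.g k ω = E.extSeq n t k} := by
    ext ω; simp [cyl]
  rw [this]
  exact Finset.measurableSet_biInter _ fun k _ => E.meas_g k _

/-- The history of `ω`. -/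
def hist (E : ERW G d p Ω P) (n : ℕ) (ω : Ω) (k : Finset.Icc 1 n) : E.S :=
  ⟨E.g k ω, E.mem_S k (Finset.mem_Icc.1 k.2).1 ω⟩

lemma mem_cyl_iff (E : ERW G d p Ω P) (n : ℕ) (t : Finset.Icc 1 n → E.S) (ω : Ω) :
    ω ∈ E.cyl n t ↔ E.hist n ω = t := by
  constructor
  · intro h
    funext k
    apply Subtype.ext
    have := h k k.2
    simpa [extSeq, hist] using this
  · rintro rfl k hk
    simp only [extSeq, hk, dif_pos, hist]

lemma Adp.repr {E : ERW G d p Ω P} {n : ℕ} {φ : Ω → ℝ} (h : E.Adp n φ) :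
    ∃ c : (Finset.Icc 1 n → E.S) → ℝ, (∀ t, ∀ ω ∈ E.cyl n t, φ ω = c t) ∧
      ∀ ψ : Ω → ℝ, ∀ ω, φ ω * ψ ω = ∑ t, (E.cyl n t).indicator (fun ω => c t * ψ ω) ω := by
  classical
  have H : ∀ t : Finset.Icc 1 n → E.S, ∃ c : ℝ, ∀ ω ∈ E.cyl n t, φ ω = c := by
    intro t
    by_cases hne : (E.cyl n t).Nonempty
    · obtain ⟨ω₀, h0⟩ := hne
      exact ⟨φ ω₀, fun ω hω => h _ _ fun k hk => (hω k hk).trans (h0 k hk).symm⟩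
    · exact ⟨0, fun ω hω => absurd ⟨ω, hω⟩ hne⟩
  choose c hc using H
  refine ⟨c, hc, fun ψ ω => ?_⟩
  rw [Finset.sum_eq_single (E.hist n ω)]
  · have hm : ω ∈ E.cyl n (E.hist n ω) := (E.mem_cyl_iff n _ ω).2 rfl
    rw [Set.indicator_of_mem hm, hc _ ω hm]
  · intro t _ ht
    exact Set.indicator_of_notMem (fun hm => ht ((E.mem_cyl_iff n t ω).1 hm).symm) _
  · simp

lemma Adp.integrable [IsProbabilityMeasure P] {E : ERW G d p Ω P} {n : ℕ} {φ : Ω → ℝ}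
    (h : E.Adp n φ) : Integrable φ P := by
  obtain ⟨c, -, hc⟩ := h.repr
  have : φ = fun ω => ∑ t, (E.cyl n t).indicator (fun _ => c t * 1) ω := by
    funext ω
    rw [← hc (fun _ => 1) ω, mul_one]
  rw [this]
  exact integrable_finsetSum _ fun t _ =>
    (integrable_const (c t * 1)).indicator (E.measurableSet_cyl n t)

/-- Conditional probability that the next step is `a`. -/
def q (E : ERW G d p Ω P) (a : G) (n : ℕ) (ω : Ω) : ℝ :=
  p * ((E.count a n ω : ℝ) / n)
    + (1 - p) / ((d : ℝ) - 1) * (((n : ℝ) - (E.count a n ω : ℝ)) / n)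

/-- The indicator that step `n` is `a`. -/
def ind (E : ERW G d p Ω P) (a : G) (n : ℕ) (ω : Ω) : ℝ := if E.g n ω = a then 1 else 0

lemma Adp.step [IsProbabilityMeasure P] {E : ERW G d p Ω P} {n : ℕ} (hn : 1 ≤ n) {φ : Ω → ℝ}
    (h : E.Adp n φ) {a : G} (ha : a ∈ E.S) :
    ∫ ω, φ ω * E.ind a (n + 1) ω ∂P = ∫ ω, φ ω * E.q a n ω ∂P := by
  obtain ⟨c, -, hc⟩ := h.repr
  have hB := E.meas_g (n + 1) a
  have e1 : (fun ω => φ ω * E.ind a (n + 1) ω) = fun ω =>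
      ∑ t, (E.cyl n t ∩ {ω | E.g (n + 1) ω = a}).indicator (fun _ => c t) ω := by
    funext ω
    rw [hc]
    refine Finset.sum_congr rfl fun t _ => ?_
    by_cases h1 : ω ∈ E.cyl n t <;> by_cases h2 : E.g (n + 1) ω = a <;>
      simp [Set.indicator, h1, h2, ind]
  have e2 : (fun ω => φ ω * E.q a n ω) = fun ω =>
      ∑ t, (E.cyl n t).indicator (fun _ => c t *
       (p * ((((Finset.Icc 1 n).filter fun k => E.extSeq n t k = a).card : ℝ) / n)
          + (1 - p) / ((d : ℝ) - 1)
            * (((n : ℝ) - (((Finset.Icc 1 n).filter fun k => E.extSeq n t k = a).card : ℝ)) / n)))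
        ω := by
    funext ω
    rw [hc]
    refine Finset.sum_congr rfl fun t _ => ?_
    by_cases h1 : ω ∈ E.cyl n t
    · rw [Set.indicator_of_mem h1, Set.indicator_of_mem h1]
      have : E.count a n ω = ((Finset.Icc 1 n).filter fun k => E.extSeq n t k = a).card := by
        unfold count
        congr 1
        apply Finset.filter_congr
        intro k hk
        rw [h1 k hk]
      rw [q, this]
    · rw [Set.indicator_of_notMem h1, Set.indicator_of_notMem h1]
  rw [e1, e2, integral_finsetSum, integral_finsetSum]
  · refine Finset.sum_congr rfl fun t _ => ?_
    rw [integral_indicator_const _ ((E.measurableSet_cyl n t).inter hB),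
      integral_indicator_const _ (E.measurableSet_cyl n t)]
    have := E.update n hn (E.extSeq n t) a ha
    simp only [smul_eq_mul, Measure.real]
    unfold cyl
    rw [this]
    ring
  · exact fun t _ => (integrable_const _).indicator (E.measurableSet_cyl n t)
  · exact fun t _ => (integrable_const _).indicator ((E.measurableSet_cyl n t).inter hB)

lemma Adp.mono {E : ERW G d p Ω P} {β : Type*} {n k : ℕ} (hnk : n ≤ k) {φ : Ω → β}
    (h : E.Adp n φ) : E.Adp k φ := fun ω ω' H => h ω ω' fun j hj => H j (by
      rw [Finset.mem_Icc] at *; omega)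

lemma adp_pos (E : ERW G d p Ω P) (n : ℕ) : E.Adp n (E.pos n) := by
  induction n with
  | zero => intro ω ω' _; rfl
  | succ n ih =>
    intro ω ω' H
    show E.g (n + 1) ω * E.pos n ω = E.g (n + 1) ω' * E.pos n ω'
    rw [H (n + 1) (by simp), ih.mono (Nat.le_succ n) ω ω' H]

lemma adp_dist (E : ERW G d p Ω P) (n : ℕ) : E.Adp n (E.dist n) := by
  intro ω ω' H
  unfold dist
  rw [E.adp_pos n ω ω' H]

lemma adp_count (E : ERW G d p Ω P) (a : G) (n : ℕ) : E.Adp n (E.count a n) := by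
  intro ω ω' H
  unfold count
  congr 1
  apply Finset.filter_congr
  intro k hk
  rw [H k hk]

lemma adp_ind (E : ERW G d p Ω P) (a : G) (n : ℕ) (hn : 1 ≤ n) : E.Adp n (E.ind a n) := by
  intro ω ω' H
  unfold ind
  rw [H n (by simp [hn])]

lemma Adp.comp₂ {E : ERW G d p Ω P} {n : ℕ} {β γ δ : Type*} {φ : Ω → β} {ψ : Ω → γ}
    (h1 : E.Adp n φ) (h2 : E.Adp n ψ) (f : β → γ → δ) : E.Adp n (fun ω => f (φ ω) (ψ ω)) :=
  fun ω ω' H => by simp only [h1 ω ω' H, h2 ω ω' H]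

lemma Adp.comp {E : ERW G d p Ω P} {n : ℕ} {β δ : Type*} {φ : Ω → β}
    (h1 : E.Adp n φ) (f : β → δ) : E.Adp n (fun ω => f (φ ω)) :=
  fun ω ω' H => by simp only [h1 ω ω' H]

/-! ### Second moments -/

/-- Centered counts. -/
def X (E : ERW G d p Ω P) (a : G) (n : ℕ) (ω : Ω) : ℝ := (E.count a n ω : ℝ) - n / d

/-- Centered distance. -/
def D (E : ERW G d p Ω P) (n : ℕ) (ω : Ω) : ℝ := (E.dist n ω : ℝ) - n * (((d : ℝ) - 2) / d)

open Classical in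
/-- Centered distance restricted to the event that `a` is the decreasing step. -/
def Phi (E : ERW G d p Ω P) (a : G) (n : ℕ) (ω : Ω) : ℝ :=
  if E.down a (E.pos n ω) then E.D n ω else 0

lemma adp_X (E : ERW G d p Ω P) (a : G) (n : ℕ) : E.Adp n (E.X a n) :=
  (E.adp_count a n).comp fun c => (c : ℝ) - n / d

lemma adp_D (E : ERW G d p Ω P) (n : ℕ) : E.Adp n (E.D n) :=
  (E.adp_dist n).comp fun c => (c : ℝ) - n * (((d : ℝ) - 2) / d)

lemma adp_Phi (E : ERW G d p Ω P) (a : G) (n : ℕ) : E.Adp n (E.Phi a n) := by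
  intro ω ω' H
  unfold Phi
  rw [E.adp_pos n ω ω' H, E.adp_D n ω ω' H]

lemma count_succ (E : ERW G d p Ω P) (a : G) (n : ℕ) (ω : Ω) :
    (E.count a (n + 1) ω : ℝ) = E.count a n ω + E.ind a (n + 1) ω := by
  unfold count ind
  rw [← Finset.insert_Icc_right_eq_Icc_add_one (by omega), Finset.filter_insert]
  split_ifs with h
  · rw [Finset.card_insert_of_notMem (by simp)]
    push_cast
    rfl
  · simp

lemma q_eq (E : ERW G d p Ω P) (hd : 3 ≤ d) (a : G) {n : ℕ} (hn : 1 ≤ n) (ω : Ω) :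
    E.q a n ω = 1 / d + (p - (1 - p) / ((d : ℝ) - 1)) / n * E.X a n ω := by
  have h1 : (d : ℝ) - 1 ≠ 0 := by
    have : (3 : ℝ) ≤ d := by exact_mod_cast hd
    linarith
  have h2 : (d : ℝ) ≠ 0 := by positivity
  have h3 : (n : ℝ) ≠ 0 := by positivity
  unfold q X
  field_simp
  ring

lemma X_step (E : ERW G d p Ω P) [IsProbabilityMeasure P] (hd : 3 ≤ d) {a : G} (ha : a ∈ E.S)
    {n : ℕ} (hn : 1 ≤ n) :
    ∫ ω, E.X a (n + 1) ω ^ 2 ∂P ≤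
      (1 + 2 * (p - (1 - p) / ((d : ℝ) - 1)) / n) * ∫ ω, E.X a n ω ^ 2 ∂P + 1 := by
  have hd3 : (3 : ℝ) ≤ d := by exact_mod_cast hd
  have iX2 : Integrable (fun ω => E.X a n ω ^ 2) P := ((E.adp_X a n).comp fun x => x ^ 2).integrable
  have iX : Integrable (fun ω => E.X a n ω) P := (E.adp_X a n).integrable
  have iXi : Integrable (fun ω => E.X a n ω * E.ind a (n + 1) ω) P :=
    (((E.adp_X a n).mono (Nat.le_succ n)).comp₂ (E.adp_ind a (n + 1) (by omega))
      fun x y => x * y).integrable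
  have iS : Integrable (fun ω => E.X a (n + 1) ω ^ 2) P :=
    ((E.adp_X a (n + 1)).comp fun x => x ^ 2).integrable
  have hstep : ∫ ω, E.X a n ω * E.ind a (n + 1) ω ∂P =
      1 / d * ∫ ω, E.X a n ω ∂P
        + (p - (1 - p) / ((d : ℝ) - 1)) / n * ∫ ω, E.X a n ω ^ 2 ∂P := by
    rw [(E.adp_X a n).step hn ha, ← integral_const_mul, ← integral_const_mul,
      ← integral_add (iX.const_mul _) (iX2.const_mul _)]
    refine integral_congr_ae (Eventually.of_forall fun ω => ?_)
    simp only [E.q_eq hd a hn ω]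
    ring
  have hle : ∫ ω, E.X a (n + 1) ω ^ 2 ∂P ≤ ∫ ω, (E.X a n ω ^ 2
      + 2 * (E.X a n ω * E.ind a (n + 1) ω) + (-(2 / d)) * E.X a n ω + 1) ∂P := by
    refine integral_mono iS ?_ fun ω => ?_
    · exact ((iX2.add (iXi.const_mul _)).add (iX.const_mul _)).add (integrable_const _)
    · have e : E.X a (n + 1) ω = E.X a n ω + (E.ind a (n + 1) ω - 1 / d) := by
        unfold X
        rw [E.count_succ]
        push_cast
        ring
      have hs : (E.ind a (n + 1) ω - 1 / d) ^ 2 ≤ 1 := by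
        have h0 : (0 : ℝ) < 1 / d := by positivity
        have h1 : (1 : ℝ) / d ≤ 1 := by
          rw [div_le_one (by linarith)]; linarith
        unfold ind
        split_ifs <;> nlinarith
      simp only [e]
      have : (E.X a n ω + (E.ind a (n + 1) ω - 1 / d)) ^ 2 = E.X a n ω ^ 2
        + 2 * (E.X a n ω * E.ind a (n + 1) ω) + (-(2 / d)) * E.X a n ω
        + (E.ind a (n + 1) ω - 1 / d) ^ 2 := by ring
      linarith
  have i2 : Integrable (fun ω => E.X a n ω ^ 2 + 2 * (E.X a n ω * E.ind a (n + 1) ω)) P :=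
    iX2.add (iXi.const_mul _)
  have i3 : Integrable (fun ω => E.X a n ω ^ 2 + 2 * (E.X a n ω * E.ind a (n + 1) ω)
      + (-(2 / d)) * E.X a n ω) P := i2.add (iX.const_mul _)
  rw [integral_add i3 (integrable_const _), integral_add i2 (iX.const_mul _),
    integral_add iX2 (iXi.const_mul _), integral_const_mul, integral_const_mul, hstep] at hle
  simp only [integral_const, probReal_univ, smul_eq_mul, mul_one] at hle
  refine hle.trans (le_of_eq ?_)
  ring

lemma D_succ_sq (E : ERW G d p Ω P) (hd : 3 ≤ d) (n : ℕ) (ω : Ω) :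
    E.D (n + 1) ω ^ 2 ≤ E.D n ω ^ 2
      + ∑ a ∈ E.S, (4 / d * E.Phi a n ω + (-4) * (E.Phi a n ω * E.ind a (n + 1) ω)) + 4 := by
  have hd3 : (3 : ℝ) ≤ d := by exact_mod_cast hd
  have hc : ((d : ℝ) - 2) / d = 1 - 2 / d := by
    field_simp
  have h0 : (0 : ℝ) < 1 / d := by positivity
  have h1 : (1 : ℝ) / d ≤ 1 / 3 := one_div_le_one_div_of_le (by norm_num) hd3
  have h2 : (2 : ℝ) / d = 2 * (1 / d) := by ring
  have h4 : (4 : ℝ) / d = 4 * (1 / d) := by ring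
  have hb := E.mem_S (n + 1) (by omega) ω
  have hdist : E.dist (n + 1) ω = (cayleyGraph E.S).dist 1 (E.g (n + 1) ω * E.pos n ω) := rfl
  have hdist0 : E.dist n ω = (cayleyGraph E.S).dist 1 (E.pos n ω) := rfl
  have hup : ¬ E.down (E.g (n + 1) ω) (E.pos n ω) → E.D (n + 1) ω = E.D n ω + 2 / d := by
    intro h
    have := E.up_of_not_down hb h
    rw [← hdist, ← hdist0] at this
    unfold D
    rw [this, hc]
    push_cast
    ring
  have hdn : E.down (E.g (n + 1) ω) (E.pos n ω) → E.D (n + 1) ω = E.D n ω + 2 / d - 2 := by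
    intro h
    have h' : E.dist (n + 1) ω + 1 = E.dist n ω := h
    unfold D
    rw [← h', hc]
    push_cast
    ring
  by_cases hp : E.pos n ω = 1
  · have hz : ∀ a ∈ E.S,
        (4 / d * E.Phi a n ω + (-4) * (E.Phi a n ω * E.ind a (n + 1) ω)) = 0 := by
      intro a _
      have : E.Phi a n ω = 0 := by
        unfold Phi
        rw [hp, if_neg (E.not_down_one a)]
      rw [this]; ring
    rw [Finset.sum_eq_zero hz, hup (by rw [hp]; exact E.not_down_one _)]
    have hneg : E.D n ω ≤ 0 := by
      unfold D
      rw [hdist0, hp, hc, h2]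
      simp only [SimpleGraph.dist_self, Nat.cast_zero]
      have : (0 : ℝ) ≤ n * (1 - 2 * (1 / d)) := mul_nonneg (by positivity) (by linarith)
      linarith
    rw [h2]
    nlinarith [mul_nonneg (neg_nonneg.2 hneg) h0.le]
  · obtain ⟨a0, ha0, hdown⟩ := E.exists_down hp
    rw [Finset.sum_eq_single a0]
    · have hP : E.Phi a0 n ω = E.D n ω := by
        unfold Phi
        rw [if_pos hdown]
      rw [hP]
      by_cases hg : E.g (n + 1) ω = a0
      · rw [hdn (hg ▸ hdown), h2, h4]
        simp only [ind, hg, if_true]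
        nlinarith
      · rw [hup (fun h => hg (E.down_unique hb ha0 h hdown)), h2, h4]
        simp only [ind, hg, if_false]
        nlinarith
    · intro b hbS hne
      have : E.Phi b n ω = 0 := by
        unfold Phi
        rw [if_neg fun h => hne (E.down_unique hbS ha0 h hdown)]
      rw [this]; ring
    · intro h; exact absurd ha0 h

/-- Total variance of the counts. -/
def V (E : ERW G d p Ω P) (n : ℕ) : ℝ := ∑ a ∈ E.S, ∫ ω, E.X a n ω ^ 2 ∂P

lemma V_nonneg (E : ERW G d p Ω P) (n : ℕ) : 0 ≤ E.V n :=
  Finset.sum_nonneg fun _ _ => integral_nonneg fun _ => sq_nonneg _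

lemma V_step (E : ERW G d p Ω P) [IsProbabilityMeasure P] (hd : 3 ≤ d) {n : ℕ} (hn : 1 ≤ n) :
    E.V (n + 1) ≤ (1 + 2 * (p - (1 - p) / ((d : ℝ) - 1)) / n) * E.V n + d := by
  have := Finset.sum_le_sum fun a (ha : a ∈ E.S) => E.X_step hd ha hn
  rw [Finset.sum_add_distrib, ← Finset.mul_sum] at this
  simpa [V, E.card_S] using this

lemma D_step (E : ERW G d p Ω P) [IsProbabilityMeasure P] (hd : 3 ≤ d) (hp0 : 0 ≤ p) (hp1 : p < 1)
    {n : ℕ} (hn : 1 ≤ n) :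
    ∫ ω, E.D (n + 1) ω ^ 2 ∂P ≤
      (1 + 1 / 2 / n) * ∫ ω, E.D n ω ^ 2 ∂P + (8 * d * (E.V n / n) + 4) := by
  have hd3 : (3 : ℝ) ≤ d := by exact_mod_cast hd
  have hn0 : (0 : ℝ) < n := by exact_mod_cast hn
  obtain ⟨α, hα⟩ : ∃ α, α = p - (1 - p) / ((d : ℝ) - 1) := ⟨_, rfl⟩
  have hα2 : α ^ 2 ≤ 1 := by
    have h1 : 0 ≤ (1 - p) / ((d : ℝ) - 1) := div_nonneg (by linarith) (by linarith)
    have h2 : (1 - p) / ((d : ℝ) - 1) ≤ 1 := by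
      rw [div_le_one (by linarith)]; linarith
    have : -1 ≤ α := by linarith
    have : α ≤ 1 := by linarith
    nlinarith
  have iD2 : Integrable (fun ω => E.D n ω ^ 2) P := ((E.adp_D n).comp fun x => x ^ 2).integrable
  have iS : Integrable (fun ω => E.D (n + 1) ω ^ 2) P :=
    ((E.adp_D (n + 1)).comp fun x => x ^ 2).integrable
  have iX2 : ∀ a, Integrable (fun ω => E.X a n ω ^ 2) P :=
    fun a => ((E.adp_X a n).comp fun x => x ^ 2).integrable
  have iP : ∀ a, Integrable (fun ω => E.Phi a n ω) P := fun a => (E.adp_Phi a n).integrable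
  have iPX : ∀ a, Integrable (fun ω => E.Phi a n ω * E.X a n ω) P :=
    fun a => ((E.adp_Phi a n).comp₂ (E.adp_X a n) fun x y => x * y).integrable
  have iPi : ∀ a, Integrable (fun ω => E.Phi a n ω * E.ind a (n + 1) ω) P := fun a =>
    (((E.adp_Phi a n).mono (Nat.le_succ n)).comp₂ (E.adp_ind a (n + 1) (by omega))
      fun x y => x * y).integrable
  have hstep : ∀ a ∈ E.S, ∫ ω, E.Phi a n ω * E.ind a (n + 1) ω ∂P =
      1 / d * ∫ ω, E.Phi a n ω ∂P + α / n * ∫ ω, E.Phi a n ω * E.X a n ω ∂P := by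
    intro a ha
    rw [(E.adp_Phi a n).step hn ha, ← integral_const_mul, ← integral_const_mul,
      ← integral_add ((iP a).const_mul _) ((iPX a).const_mul _)]
    refine integral_congr_ae (Eventually.of_forall fun ω => ?_)
    simp only [E.q_eq hd a hn ω, ← hα]
    ring
  have iT : ∀ a, Integrable
      (fun ω => 4 / d * E.Phi a n ω + (-4) * (E.Phi a n ω * E.ind a (n + 1) ω)) P :=
    fun a => ((iP a).const_mul _).add ((iPi a).const_mul _)
  have iU : Integrable (fun ω => ∑ a ∈ E.S,
      (4 / d * E.Phi a n ω + (-4) * (E.Phi a n ω * E.ind a (n + 1) ω))) P :=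
    integrable_finsetSum E.S fun a _ => iT a
  have iW : Integrable (fun ω => E.D n ω ^ 2 + ∑ a ∈ E.S,
      (4 / d * E.Phi a n ω + (-4) * (E.Phi a n ω * E.ind a (n + 1) ω))) P := iD2.add iU
  have iW4 : Integrable (fun ω => E.D n ω ^ 2 + ∑ a ∈ E.S,
      (4 / d * E.Phi a n ω + (-4) * (E.Phi a n ω * E.ind a (n + 1) ω)) + 4) P :=
    iW.add (integrable_const (4 : ℝ))
  have hle := integral_mono iS iW4 (fun ω => E.D_succ_sq hd n ω)
  have hT : ∀ a ∈ E.S,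
      ∫ ω, (4 / d * E.Phi a n ω + (-4) * (E.Phi a n ω * E.ind a (n + 1) ω)) ∂P ≤
        1 / (2 * d) / n * ∫ ω, E.D n ω ^ 2 ∂P + 8 * d / n * ∫ ω, E.X a n ω ^ 2 ∂P := by
    intro a ha
    rw [integral_add ((iP a).const_mul _) ((iPi a).const_mul _), integral_const_mul,
      integral_const_mul, hstep a ha]
    have hb : -4 * α / n * ∫ ω, E.Phi a n ω * E.X a n ω ∂P ≤
        1 / (2 * d) / n * ∫ ω, E.D n ω ^ 2 ∂P + 8 * d / n * ∫ ω, E.X a n ω ^ 2 ∂P := by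
      rw [← integral_const_mul, ← integral_const_mul, ← integral_const_mul,
        ← integral_add (iD2.const_mul _) ((iX2 a).const_mul _)]
      refine integral_mono ((iPX a).const_mul _)
        ((iD2.const_mul _).add ((iX2 a).const_mul _)) fun ω => ?_
      have hPD : E.Phi a n ω ^ 2 ≤ E.D n ω ^ 2 := by
        unfold Phi
        split_ifs
        · exact le_rfl
        · simpa using sq_nonneg (E.D n ω)
      have hd0 : (0 : ℝ) < 1 / (2 * d) := by positivity
      have k1 : -4 * α * (E.Phi a n ω * E.X a n ω) ≤
          1 / (2 * d) * E.Phi a n ω ^ 2 + 8 * d * (α ^ 2 * E.X a n ω ^ 2) := by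
        have : 0 ≤ 1 / (2 * d) * (E.Phi a n ω + 4 * d * α * E.X a n ω) ^ 2 := by positivity
        have e : 1 / (2 * (d : ℝ)) * (E.Phi a n ω + 4 * d * α * E.X a n ω) ^ 2 =
          1 / (2 * d) * E.Phi a n ω ^ 2 + 4 * α * (E.Phi a n ω * E.X a n ω)
            + 8 * d * (α ^ 2 * E.X a n ω ^ 2) := by
          field_simp
          ring
        linarith
      have k2 : α ^ 2 * E.X a n ω ^ 2 ≤ E.X a n ω ^ 2 := by nlinarith [sq_nonneg (E.X a n ω)]
      have k3 : -4 * α * (E.Phi a n ω * E.X a n ω) ≤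
          1 / (2 * d) * E.D n ω ^ 2 + 8 * d * E.X a n ω ^ 2 := by
        refine k1.trans ?_
        gcongr
      have := div_le_div_of_nonneg_right k3 hn0.le
      calc _ = -4 * α * (E.Phi a n ω * E.X a n ω) / n := by ring
        _ ≤ _ := this
        _ = _ := by ring
    refine le_trans (le_of_eq ?_) hb
    ring
  have hsum := Finset.sum_le_sum hT
  rw [Finset.sum_add_distrib, ← Finset.mul_sum, ← Finset.mul_sum, Finset.sum_const, E.card_S,
    nsmul_eq_mul] at hsum
  have hV : ∑ a ∈ E.S, ∫ ω, E.X a n ω ^ 2 ∂P = E.V n := rfl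
  rw [hV] at hsum
  rw [integral_add iW (integrable_const _), integral_add iD2 iU,
    integral_finsetSum E.S fun a _ => iT a] at hle
  simp only [integral_const, probReal_univ, smul_eq_mul, one_mul] at hle
  have hs2 : 1 / (2 * d) / n * ((d : ℝ) * ∫ ω, E.D n ω ^ 2 ∂P) =
    1 / 2 / n * ∫ ω, E.D n ω ^ 2 ∂P := by
    field_simp
  have hs3 : 8 * (d : ℝ) / n * E.V n = 8 * d * (E.V n / n) := by ring
  rw [hs2, hs3] at hsum
  linarith

end ERW

/-! ### Deterministic recursions -/

lemma rec_le {z F h : ℕ → ℝ} {β : ℝ} (hβ : 0 ≤ β)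
    (hz : ∀ n : ℕ, 1 ≤ n → z (n + 1) ≤ (1 + β / n) * z n + h n)
    (hF : ∀ n : ℕ, 1 ≤ n → (1 + β / n) * F n + h n ≤ F (n + 1)) (h1 : z 1 ≤ F 1) :
    ∀ n : ℕ, 1 ≤ n → z n ≤ F n := by
  intro n hn
  induction n, hn using Nat.le_induction with
  | base => exact h1
  | succ n hn ih =>
    refine (hz n hn).trans (le_trans ?_ (hF n hn))
    have : 0 ≤ 1 + β / n := by positivity
    gcongr

lemma rec_sub {v y : ℕ → ℝ} {β K L : ℝ} (hβ0 : 0 ≤ β) (hβ : β < 1) (hL : 0 ≤ L)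
    (hv : ∀ n : ℕ, 1 ≤ n → v (n + 1) ≤ (1 + β / n) * v n + K)
    (hy : ∀ n : ℕ, 1 ≤ n → y (n + 1) ≤ (1 + 1 / 2 / n) * y n + (L * (v n / n) + 4)) :
    ∃ B, ∀ n : ℕ, 1 ≤ n → y n ≤ B * n := by
  have lin : ∀ {z : ℕ → ℝ} {β K : ℝ}, 0 ≤ β → β < 1 →
      (∀ n : ℕ, 1 ≤ n → z (n + 1) ≤ (1 + β / n) * z n + K) →
      ∃ B, ∀ n : ℕ, 1 ≤ n → z n ≤ B * n := by
    intro z β K h0 h1 hz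
    refine ⟨max (z 1) (K / (1 - β)), rec_le (h := fun _ => K) h0 hz (fun n hn => ?_) ?_⟩
    · have hn0 : (0 : ℝ) < n := by exact_mod_cast hn
      have hB : K / (1 - β) ≤ max (z 1) (K / (1 - β)) := le_max_right _ _
      rw [div_le_iff₀ (by linarith)] at hB
      have e : (1 + β / n) * (max (z 1) (K / (1 - β)) * n) + K =
        max (z 1) (K / (1 - β)) * n + β * max (z 1) (K / (1 - β)) + K := by
        field_simp
      rw [e]
      push_cast
      linarith
    · simp
  obtain ⟨A, hA⟩ := lin hβ0 hβ hv
  refine lin (by norm_num : (0 : ℝ) ≤ 1 / 2) (by norm_num) (K := L * A + 4) fun n hn => ?_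
  have hn0 : (0 : ℝ) < n := by exact_mod_cast hn
  have : v n / n ≤ A := by
    rw [div_le_iff₀ hn0]; exact hA n hn
  refine (hy n hn).trans ?_
  gcongr

lemma rec_crit {v y : ℕ → ℝ} {K L : ℝ} (hL : 0 ≤ L)
    (hv : ∀ n : ℕ, 1 ≤ n → v (n + 1) ≤ (1 + 1 / n) * v n + K)
    (hy : ∀ n : ℕ, 1 ≤ n → y (n + 1) ≤ (1 + 1 / 2 / n) * y n + (L * (v n / n) + 4)) :
    ∃ B, ∀ n : ℕ, 1 ≤ n → y n ≤ B * (n * (1 + Real.log n)) := by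
  have hlog : ∀ n : ℕ, 1 ≤ n → 0 ≤ Real.log n := fun n hn =>
    Real.log_nonneg (by exact_mod_cast hn)
  have hlogs : ∀ n : ℕ, 1 ≤ n → 1 ≤ ((n : ℝ) + 1) * (Real.log (n + 1) - Real.log n) := by
    intro n hn
    have hn0 : (0 : ℝ) < n := by exact_mod_cast hn
    have h := Real.one_sub_inv_le_log_of_pos (x := ((n : ℝ) + 1) / n) (by positivity)
    rw [Real.log_div (by positivity) (by positivity)] at h
    have e : ((n : ℝ) + 1) * (1 - (((n : ℝ) + 1) / n)⁻¹) = 1 := by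
      field_simp
      ring
    exact e.symm.le.trans (mul_le_mul_of_nonneg_left h (by positivity))
  obtain ⟨A, hA0, hA⟩ : ∃ A, 0 ≤ A ∧ ∀ n : ℕ, 1 ≤ n → v n ≤ A * (n * (1 + Real.log n)) := by
    obtain ⟨A, hAd⟩ : ∃ A, A = max (max (v 1) K) 0 := ⟨_, rfl⟩
    have a1 : v 1 ≤ A := hAd ▸ (le_max_left _ _).trans (le_max_left _ _)
    have a2 : K ≤ A := hAd ▸ (le_max_right _ _).trans (le_max_left _ _)
    have a3 : 0 ≤ A := hAd ▸ le_max_right _ _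
    refine ⟨A, a3, rec_le (h := fun _ => K) zero_le_one hv (fun n hn => ?_) (by simpa using a1)⟩
    have hn0 : (0 : ℝ) < n := by exact_mod_cast hn
    have e : (1 + 1 / (n : ℝ)) * (A * (n * (1 + Real.log n))) =
      A * ((n + 1) * (1 + Real.log n)) := by field_simp
    rw [e]
    push_cast
    have := mul_le_mul_of_nonneg_left (hlogs n hn) a3
    nlinarith
  obtain ⟨B, hBd⟩ : ∃ B, B = max (y 1) (2 * (L * A + 4)) := ⟨_, rfl⟩
  have b1 : y 1 ≤ B := hBd ▸ le_max_left _ _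
  have b2 : 2 * (L * A + 4) ≤ B := hBd ▸ le_max_right _ _
  have b3 : 0 ≤ B := le_trans (by positivity) b2
  refine ⟨B, rec_le (h := fun n => (L * A + 4) * (1 + Real.log n))
    (by norm_num : (0 : ℝ) ≤ 1 / 2) (fun n hn => ?_) (fun n hn => ?_) (by simpa using b1)⟩
  · have hn0 : (0 : ℝ) < n := by exact_mod_cast hn
    have h1 : v n / n ≤ A * (1 + Real.log n) := by
      rw [div_le_iff₀ hn0]
      refine (hA n hn).trans (le_of_eq (by ring))
    have h2 := mul_le_mul_of_nonneg_left h1 hL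
    have h3 := hlog n hn
    have h4 := hy n hn
    have e : (L * A + 4) * (1 + Real.log n) = L * (A * (1 + Real.log n)) + 4 + 4 * Real.log n := by
      ring
    rw [e]
    linarith
  · have hn0 : (0 : ℝ) < n := by exact_mod_cast hn
    have h3 := hlog n hn
    have e : (1 + 1 / 2 / (n : ℝ)) * (B * (n * (1 + Real.log n))) =
      B * (n * (1 + Real.log n)) + B / 2 * (1 + Real.log n) := by field_simp
    rw [e]
    push_cast
    have hm : Real.log n ≤ Real.log (n + 1) := Real.log_le_log hn0 (by linarith)
    have k1 : (L * A + 4) * (1 + Real.log n) ≤ B / 2 * (1 + Real.log n) := by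
      gcongr; linarith
    have k2 : B * ((n + 1) * (1 + Real.log n)) ≤ B * ((n + 1) * (1 + Real.log (n + 1))) := by
      gcongr
    nlinarith

lemma rec_super {v y : ℕ → ℝ} {β K L : ℝ} (hβ : 1 < β) (hK : 0 ≤ K) (hL : 0 ≤ L)
    (hv : ∀ n : ℕ, 1 ≤ n → v (n + 1) ≤ (1 + β / n) * v n + K)
    (hy : ∀ n : ℕ, 1 ≤ n → y (n + 1) ≤ (1 + 1 / 2 / n) * y n + (L * (v n / n) + 4)) :
    ∃ B, ∀ n : ℕ, 1 ≤ n → y n ≤ B * (n : ℝ) ^ β := by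
  have hbern : ∀ n : ℕ, 1 ≤ n → (1 + β / n) * (n : ℝ) ^ β ≤ ((n : ℝ) + 1) ^ β := by
    intro n hn
    have hn0 : (0 : ℝ) < n := by exact_mod_cast hn
    have h := one_add_mul_self_le_rpow_one_add (s := 1 / (n : ℝ)) (p := β)
      (le_trans (by norm_num) (by positivity : (0 : ℝ) ≤ 1 / n)) hβ.le
    have e : ((n : ℝ) + 1) ^ β = (1 + 1 / (n : ℝ)) ^ β * (n : ℝ) ^ β := by
      rw [← Real.mul_rpow (by positivity) (by positivity)]
      congr 1
      field_simp
    rw [e]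
    have e2 : β / n = β * (1 / n) := by ring
    rw [e2]
    gcongr
  obtain ⟨A, hA0, hA⟩ : ∃ A, 0 ≤ A ∧ ∀ n : ℕ, 1 ≤ n → v n ≤ A * (n : ℝ) ^ β := by
    obtain ⟨B, hB⟩ : ∃ B, B = K / (β - 1) := ⟨_, rfl⟩
    have hB0 : 0 ≤ B := hB ▸ div_nonneg hK (by linarith)
    have hBK : B * (β - 1) = K := by
      rw [hB, div_mul_cancel₀]; linarith
    obtain ⟨A, hAd⟩ : ∃ A, A = max (v 1 + B) 0 := ⟨_, rfl⟩
    have a1 : v 1 + B ≤ A := hAd ▸ le_max_left _ _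
    have a3 : 0 ≤ A := hAd ▸ le_max_right _ _
    have key := rec_le (h := fun _ => K) (F := fun n => A * (n : ℝ) ^ β - B * n)
      (by linarith) hv (fun n hn => ?_) (by simp; linarith)
    · refine ⟨A, a3, fun n hn => (key n hn).trans ?_⟩
      have : 0 ≤ B * n := by positivity
      linarith
    have hn0 : (0 : ℝ) < n := by exact_mod_cast hn
    have e : (1 + β / n) * (A * (n : ℝ) ^ β - B * n) =
      A * ((1 + β / n) * (n : ℝ) ^ β) - B * n - B * β := by
      field_simp
      ring
    rw [e]
    push_cast
    have := mul_le_mul_of_nonneg_left (hbern n hn) a3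
    nlinarith
  obtain ⟨B, hBd⟩ : ∃ B, B = max (y 1) (2 * (L * A + 4)) := ⟨_, rfl⟩
  have b1 : y 1 ≤ B := hBd ▸ le_max_left _ _
  have b2 : 2 * (L * A + 4) ≤ B := hBd ▸ le_max_right _ _
  have b3 : 0 ≤ B := le_trans (by positivity) b2
  refine ⟨B, rec_le (h := fun n : ℕ => (L * A + 4) * ((n : ℝ) ^ β / n))
    (by norm_num : (0 : ℝ) ≤ 1 / 2) (fun n hn => ?_) (fun n hn => ?_) (by simpa using b1)⟩
  · have hn0 : (0 : ℝ) < n := by exact_mod_cast hn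
    have hn1 : (1 : ℝ) ≤ n := by exact_mod_cast hn
    have h1 : v n / n ≤ A * ((n : ℝ) ^ β / n) := by
      rw [← mul_div_assoc]
      exact div_le_div_of_nonneg_right (hA n hn) hn0.le
    have h2 := mul_le_mul_of_nonneg_left h1 hL
    have h3 : 1 ≤ (n : ℝ) ^ β / n := by
      rw [le_div_iff₀ hn0, one_mul]
      exact Real.self_le_rpow_of_one_le hn1 hβ.le
    have h4 := hy n hn
    linarith
  · have hn0 : (0 : ℝ) < n := by exact_mod_cast hn
    have hq : 0 ≤ (n : ℝ) ^ β / n := by positivity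
    have h := mul_le_mul_of_nonneg_left (hbern n hn) b3
    have e : (1 + β / n) * (n : ℝ) ^ β = (n : ℝ) ^ β + β * ((n : ℝ) ^ β / n) := by ring
    have e2 : (1 + 1 / 2 / n) * (B * (n : ℝ) ^ β) = B * (n : ℝ) ^ β + B / 2 * ((n : ℝ) ^ β / n) := by
      ring
    rw [e] at h
    rw [e2]
    push_cast
    have k1 : (L * A + 4) * ((n : ℝ) ^ β / n) ≤ B / 2 * ((n : ℝ) ^ β / n) := by
      gcongr; linarith
    have k2 : B * ((n : ℝ) ^ β / n) ≤ B * (β * ((n : ℝ) ^ β / n)) := by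
      gcongr
      nlinarith
    linarith

lemma rpow_le_one_add_sq {t m : ℝ} (ht : 0 ≤ t) (hm0 : 0 ≤ m) (hm : m ≤ 2) :
    t ^ m ≤ 1 + t ^ 2 := by
  rcases le_total t 1 with h | h
  · have := Real.rpow_le_one ht h hm0
    nlinarith [sq_nonneg t]
  · have := Real.rpow_le_rpow_of_exponent_le h hm
    rw [Real.rpow_two] at this
    linarith

lemma rate_nonneg (p : ℝ) (d n : ℕ) : 0 ≤ rate p d n := by
  unfold rate
  split_ifs <;> positivity

lemma erw_second_moment
    {G : Type*} [Group G] [DecidableEq G] {Ω : Type*} [MeasurableSpace Ω]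
    {P : Measure Ω} [IsProbabilityMeasure P]
    (d : ℕ) (hd : 3 ≤ d) (p : ℝ) (hp0 : 0 ≤ p) (hp1 : p < 1) (E : ERW G d p Ω P) :
    ∃ C : ℝ, 0 ≤ C ∧ ∀ n : ℕ, 1 ≤ n →
      rate p d n ^ 2 * ((∫ ω, E.D n ω ^ 2 ∂P) / (n : ℝ) ^ 2) ≤ C := by
  have hd3 : (3 : ℝ) ≤ d := by exact_mod_cast hd
  obtain ⟨α, hα⟩ : ∃ α, α = p - (1 - p) / ((d : ℝ) - 1) := ⟨_, rfl⟩
  have hα1 : 1 - α = (d : ℝ) * (1 - p) / ((d : ℝ) - 1) := by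
    rw [hα]
    have : (d : ℝ) - 1 ≠ 0 := by linarith
    field_simp
    ring
  have hcrit : α - 1 / 2 = d / (d - 1) * (p - ((d : ℝ) + 1) / (2 * d)) := by
    rw [hα]
    have : (d : ℝ) - 1 ≠ 0 := by linarith
    field_simp
    ring
  have hpos : 0 < (d : ℝ) / (d - 1) := div_pos (by linarith) (by linarith)
  have hV : ∀ n : ℕ, 1 ≤ n → E.V (n + 1) ≤ (1 + 2 * α / n) * E.V n + d := fun n hn => by
    rw [hα]; exact E.V_step hd hn
  have hD := fun (n : ℕ) (hn : 1 ≤ n) => E.D_step hd hp0 hp1 hn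
  have hL : (0 : ℝ) ≤ 8 * d := by positivity
  unfold rate
  rcases lt_trichotomy p (((d : ℝ) + 1) / (2 * d)) with h | h | h
  · have h2 : 2 * α < 1 := by
      have := mul_neg_of_pos_of_neg hpos (sub_neg.2 h)
      linarith
    obtain ⟨B, hB⟩ := rec_sub (v := E.V) (y := fun n => ∫ ω, E.D n ω ^ 2 ∂P)
      (β := max (2 * α) 0) (K := d) (le_max_right _ _)
      (max_lt h2 one_pos) hL (fun n hn => (hV n hn).trans (by
        have := E.V_nonneg n
        gcongr
        exact le_max_left _ _)) hD
    refine ⟨max B 0, le_max_right _ _, fun n hn => ?_⟩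
    have hn0 : (0 : ℝ) < n := by exact_mod_cast hn
    rw [if_pos h, Real.sq_sqrt hn0.le]
    refine le_trans ?_ (le_max_left _ _)
    calc _ ≤ (n : ℝ) * (B * n / (n : ℝ) ^ 2) := by
          gcongr
          exact hB n hn
      _ = B := by field_simp
  · have h2 : 2 * α = 1 := by
      rw [h, sub_self, mul_zero] at hcrit
      linarith
    rw [h2] at hV
    obtain ⟨B, hB⟩ := rec_crit (v := E.V) (y := fun n => ∫ ω, E.D n ω ^ 2 ∂P) hL hV hD
    have hB0 : 0 ≤ B := by
      have := hB 1 le_rfl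
      simp only [Nat.cast_one, Real.log_one, add_zero, mul_one] at this
      exact le_trans (integral_nonneg fun _ => sq_nonneg _) this
    have hl2 : 0 < Real.log 2 := Real.log_pos (by norm_num)
    refine ⟨B * (1 / Real.log 2 + 1), by positivity, fun n hn => ?_⟩
    have hn0 : (0 : ℝ) < n := by exact_mod_cast hn
    rw [if_neg h.not_lt, if_pos h]
    have hlog : 0 ≤ Real.log n := Real.log_nonneg (by exact_mod_cast hn)
    rw [Real.sq_sqrt (by positivity)]
    rcases hn.eq_or_lt with h1 | h1
    · subst h1
      simp only [Nat.cast_one, Real.log_one, div_zero, zero_mul]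
      positivity
    have hle : Real.log 2 ≤ Real.log n := Real.log_le_log (by norm_num) (by exact_mod_cast h1)
    have hlp : 0 < Real.log n := by linarith
    calc _ ≤ (n : ℝ) / Real.log n * (B * (n * (1 + Real.log n)) / (n : ℝ) ^ 2) := by
          gcongr
          exact hB n hn
      _ = B * (1 / Real.log n + 1) := by field_simp
      _ ≤ _ := by gcongr
  · have h2 : 1 < 2 * α := by
      have := mul_pos hpos (sub_pos.2 h)
      linarith
    obtain ⟨B, hB⟩ := rec_super (v := E.V) (y := fun n => ∫ ω, E.D n ω ^ 2 ∂P)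
      h2 (by positivity) hL hV hD
    refine ⟨max B 0, le_max_right _ _, fun n hn => ?_⟩
    have hn0 : (0 : ℝ) < n := by exact_mod_cast hn
    rw [if_neg h.not_gt, if_neg h.ne', ← hα1]
    refine le_trans ?_ (le_max_left _ _)
    have e : ((n : ℝ) ^ (1 - α)) ^ 2 * (n : ℝ) ^ (2 * α) = (n : ℝ) ^ 2 := by
      rw [← Real.rpow_mul_natCast hn0.le, ← Real.rpow_add hn0, ← Real.rpow_two]
      congr 1
      push_cast
      ring
    calc _ ≤ ((n : ℝ) ^ (1 - α)) ^ 2 * (B * (n : ℝ) ^ (2 * α) / (n : ℝ) ^ 2) := by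
          gcongr
          exact hB n hn
      _ = B * (((n : ℝ) ^ (1 - α)) ^ 2 * (n : ℝ) ^ (2 * α)) / (n : ℝ) ^ 2 := by ring
      _ = B := by rw [e]; field_simp

/-- for `p ∈ [0,1)` and any `m ∈ [1,2)`, there is `C > 0` such that
`E|Δ n / n - (d-2)/d|^m ≤ C * r n ^ (-m)` for all `n ≥ 1` (stated in the equivalent
product form `r n ^ m * E|⋯|^m ≤ C`, which avoids the degenerate value `r 1 = 0`
in the critical case). -/
theorem erw_rate_upper
    {G : Type*} [Group G] [DecidableEq G] {Ω : Type*} [MeasurableSpace Ω]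
    {P : Measure Ω} [IsProbabilityMeasure P]
    (d : ℕ) (hd : 3 ≤ d) (p : ℝ) (hp0 : 0 ≤ p) (hp1 : p < 1)
    (E : ERW G d p Ω P) (m : ℝ) (hm1 : 1 ≤ m) (hm2 : m < 2) :
    ∃ C : ℝ, 0 < C ∧ ∀ n : ℕ, 1 ≤ n →
      rate p d n ^ m *
        ∫ ω, |(E.dist n ω : ℝ) / n - ((d : ℝ) - 2) / d| ^ m ∂P ≤ C := by
  obtain ⟨C, hC0, hC⟩ := erw_second_moment d hd p hp0 hp1 E
  refine ⟨1 + C, by linarith, fun n hn => ?_⟩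
  have hn0 : (0 : ℝ) < n := by exact_mod_cast hn
  have hr := rate_nonneg p d n
  have iD2 : Integrable (fun ω => rate p d n ^ 2 / (n : ℝ) ^ 2 * E.D n ω ^ 2) P :=
    ((E.adp_D n).comp fun x => rate p d n ^ 2 / (n : ℝ) ^ 2 * x ^ 2).integrable
  have i1 : Integrable (fun ω => rate p d n ^ m *
      |(E.dist n ω : ℝ) / n - ((d : ℝ) - 2) / d| ^ m) P :=
    ((E.adp_dist n).comp fun x =>
      rate p d n ^ m * |(x : ℝ) / n - ((d : ℝ) - 2) / d| ^ m).integrable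
  rw [← integral_const_mul]
  calc _ ≤ ∫ ω, (1 + rate p d n ^ 2 / (n : ℝ) ^ 2 * E.D n ω ^ 2) ∂P := by
        refine integral_mono i1 ((integrable_const _).add iD2) fun ω => ?_
        have e : (E.dist n ω : ℝ) / n - ((d : ℝ) - 2) / d = E.D n ω / n := by
          unfold ERW.D
          field_simp
        simp only
        rw [e, ← Real.mul_rpow hr (abs_nonneg _)]
        refine (rpow_le_one_add_sq (by positivity) (by linarith) hm2.le).trans (le_of_eq ?_)
        rw [mul_pow, sq_abs]
        ring
    _ = 1 + rate p d n ^ 2 * ((∫ ω, E.D n ω ^ 2 ∂P) / (n : ℝ) ^ 2) := by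
        rw [integral_add (integrable_const _) iD2, integral_const_mul]
        simp only [integral_const, probReal_univ, smul_eq_mul, mul_one]
        ring
    _ ≤ 1 + C := by linarith [hC n hn]

end
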